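/- Let X be an ACM set of s distinct points in P^m × P^n with s_1 = |X_1| and s_2 = |X_2|. Then HF_{ϑ_X}(i,j) = s for all (i,j) ⪰ ((s_1−1)(m+2), (s_2−1)(n+2)). -/

import Mathlib

/- Common setup: finite sets of points in the multiprojective space
   `P^m x P^n` over a field `K` of characteristic zero, their bihomogeneous
   vanishing ideals, bigraded Hilbert functions, Kähler differents,
   separators, Cayley-Bacharach property and complete intersections. -/

open MvPolynomial

set_option maxHeartbeats 1000000
set_option synthInstance.maxHeartbeats 400000

noncomputable section

namespace MultiProjPoints

variable (K : Type) [Field K] [CharZero K] [DecidableEq K]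

/-- The bigraded coordinate ring `S = K[X_0,…,X_m,Y_0,…,Y_n]` of `P^m × P^n`. -/
abbrev BiRing (m n : ℕ) : Type := MvPolynomial (Fin (m+1) ⊕ Fin (n+1)) K

/-- The weights giving the bigrading: `deg X_i = (1,0)`, `deg Y_j = (0,1)`. -/
def biwt (m n : ℕ) : (Fin (m+1) ⊕ Fin (n+1)) → ℤ × ℤ :=
  Sum.elim (fun _ => ((1 : ℤ), (0 : ℤ))) (fun _ => ((0 : ℤ), (1 : ℤ)))

variable {m n : ℕ}

/-- A (representative of a) point of `P^m × P^n`. -/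
abbrev BiPt (m n : ℕ) : Type := (Fin (m+1) → K) × (Fin (n+1) → K)

/-- `F` is bihomogeneous of degree `d`. -/
def IsBihom (F : BiRing K m n) (d : ℤ × ℤ) : Prop :=
  IsWeightedHomogeneous (biwt m n) F d

/-- Evaluation of a polynomial at (a representative of) a point. -/
def evalB (p : BiPt K m n) (F : BiRing K m n) : K :=
  eval (Sum.elim p.1 p.2) F

/-- A finset of representatives is a good configuration of points of
`P^m × P^n`: all representatives are nonzero, and proportional
representatives coincide (so distinct elements are distinct projective
points, and images under the two projections behave correctly). -/
def GoodConfig (𝕏 : Finset (BiPt K m n)) : Prop :=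
  (∀ p ∈ 𝕏, p.1 ≠ 0 ∧ p.2 ≠ 0) ∧
  (∀ p ∈ 𝕏, ∀ q ∈ 𝕏, (∃ c : K, c ≠ 0 ∧ p.1 = c • q.1) → p.1 = q.1) ∧
  (∀ p ∈ 𝕏, ∀ q ∈ 𝕏, (∃ c : K, c ≠ 0 ∧ p.2 = c • q.2) → p.2 = q.2)

/-- The bihomogeneous vanishing ideal `I_𝕏` of a set of points. -/
def vIdealB (𝕏 : Finset (BiPt K m n)) : Ideal (BiRing K m n) :=
  Ideal.span {F | (∃ d, IsBihom K F d) ∧ ∀ p ∈ 𝕏, evalB K p F = 0}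

/-- The bihomogeneous vanishing ideal of a single point. -/
def ptIdealB (p : BiPt K m n) : Ideal (BiRing K m n) :=
  Ideal.span {F | (∃ d, IsBihom K F d) ∧ evalB K p F = 0}

/-- The degree-`d` piece of `S/I`. -/
def degPieceB (I : Ideal (BiRing K m n)) (d : ℤ × ℤ) :
    Submodule K (BiRing K m n ⧸ I) :=
  (weightedHomogeneousSubmodule K (biwt m n) d).map
    (Ideal.Quotient.mkₐ K I).toLinearMap

/-- The Hilbert function of `S/I`. -/
def HFI (I : Ideal (BiRing K m n)) (d : ℤ × ℤ) : ℕ :=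
  Module.finrank K (degPieceB K I d)

/-- The Hilbert function of a set of points in `P^m × P^n`. -/
def HFB (𝕏 : Finset (BiPt K m n)) (d : ℤ × ℤ) : ℕ :=
  HFI K (vIdealB K 𝕏) d

/-- The Hilbert function of a (bihomogeneous) ideal `J` of `R_𝕏 = S/I`. -/
def HFIdealB (I : Ideal (BiRing K m n)) (J : Ideal (BiRing K m n ⧸ I))
    (d : ℤ × ℤ) : ℕ :=
  Module.finrank K ↥((Submodule.restrictScalars K J) ⊓ degPieceB K I d)

/- ### Single projective space `P^N` -/

/-- The coordinate ring `K[X_0,…,X_N]` of `P^N`. -/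
abbrev PRing (N : ℕ) : Type := MvPolynomial (Fin (N+1)) K

/-- The standard grading on `K[X_0,…,X_N]` (with values in `ℤ`). -/
def wt1 (N : ℕ) : Fin (N+1) → ℤ := fun _ => 1

/-- `F` is homogeneous of degree `d`. -/
def IsHom1 {N : ℕ} (F : PRing K N) (d : ℤ) : Prop :=
  IsWeightedHomogeneous (wt1 N) F d

/-- A good finite set of representatives of points in `P^N`. -/
def GoodSet {N : ℕ} (Y : Finset (Fin (N+1) → K)) : Prop :=
  (∀ q ∈ Y, q ≠ 0) ∧
  (∀ p ∈ Y, ∀ q ∈ Y, (∃ c : K, c ≠ 0 ∧ p = c • q) → p = q)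

/-- The homogeneous vanishing ideal of a set of points in `P^N`. -/
def vIdeal1 {N : ℕ} (Y : Finset (Fin (N+1) → K)) : Ideal (PRing K N) :=
  Ideal.span {F | (∃ d, IsHom1 K F d) ∧ ∀ q ∈ Y, eval q F = 0}

/-- The degree-`d` piece of `K[X_0,…,X_N]/I`. -/
def degPiece1 {N : ℕ} (I : Ideal (PRing K N)) (d : ℤ) :
    Submodule K (PRing K N ⧸ I) :=
  (weightedHomogeneousSubmodule K (wt1 N) d).map
    (Ideal.Quotient.mkₐ K I).toLinearMap

/-- The Hilbert function of a set of points in `P^N`. -/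
def HF1 {N : ℕ} (Y : Finset (Fin (N+1) → K)) (d : ℤ) : ℕ :=
  Module.finrank K (degPiece1 K (vIdeal1 K Y) d)

/-- The Hilbert function of a homogeneous ideal of `K[X_0,…,X_N]/I`. -/
def HFIdeal1 {N : ℕ} (I : Ideal (PRing K N)) (J : Ideal (PRing K N ⧸ I))
    (d : ℤ) : ℕ :=
  Module.finrank K ↥((Submodule.restrictScalars K J) ⊓ degPiece1 K I d)

/-- The degree `deg_Y(q)` of a point `q` in `Y ⊆ P^N`: the minimal degree of
a homogeneous separator of `q` in `Y`. -/
def deg1 {N : ℕ} (Y : Finset (Fin (N+1) → K)) (q : Fin (N+1) → K) : ℕ :=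
  sInf {d : ℕ | ∃ F : PRing K N, IsHom1 K F (d : ℤ) ∧ eval q F ≠ 0 ∧
    ∀ q' ∈ Y, q' ≠ q → eval q' F = 0}

/-- The regularity index of the Hilbert function of `Y ⊆ P^N`. -/
def regIndex1 {N : ℕ} (Y : Finset (Fin (N+1) → K)) : ℕ :=
  sInf {r : ℕ | ∀ i : ℕ, r ≤ i → HF1 K Y (i : ℤ) = Y.card}

/-- `Y ⊆ P^N` is a Cayley-Bacharach scheme. -/
def IsCB1 {N : ℕ} (Y : Finset (Fin (N+1) → K)) : Prop :=
  ∀ q ∈ Y, deg1 K Y q = regIndex1 K Y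

/- ### Kähler differents -/

/-- The variables `X_1,…,X_m,Y_1,…,Y_n` indexed by `Fin (m+n)`. -/
def bvar (m n : ℕ) (v : Fin (m+n)) : Fin (m+1) ⊕ Fin (n+1) :=
  if h : (v : ℕ) < m then Sum.inl ⟨(v : ℕ) + 1, by omega⟩
  else Sum.inr ⟨(v : ℕ) - m + 1, by have hv := v.isLt; omega⟩

/-- The Kähler different of `R = S/I` w.r.t. a system of generators `F` of
`I`: the ideal generated by the `(m+n)×(m+n)`-minors of the Jacobian matrix
`(∂F_k/∂X_i, ∂F_k/∂Y_j)`. -/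
def kdiffB (I : Ideal (BiRing K m n)) {r : ℕ} (F : Fin r → BiRing K m n) :
    Ideal (BiRing K m n ⧸ I) :=
  Ideal.span (Set.range fun ρ : Fin (m+n) → Fin r =>
    Ideal.Quotient.mk I (Matrix.det (Matrix.of fun u v : Fin (m+n) =>
      pderiv (bvar m n v) (F (ρ u)))))

/-- The Kähler different of `K[X_0,…,X_N]/I` w.r.t. a system of generators
`F` of `I` (minors w.r.t. the variables `X_1,…,X_N`). -/
def kdiff1 {N : ℕ} (I : Ideal (PRing K N)) {r : ℕ} (F : Fin r → PRing K N) :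
    Ideal (PRing K N ⧸ I) :=
  Ideal.span (Set.range fun ρ : Fin N → Fin r =>
    Ideal.Quotient.mk I (Matrix.det (Matrix.of fun u v : Fin N =>
      pderiv (Fin.succ v) (F (ρ u)))))

/-- The extension `ϑ_{𝕏₁} R_𝕏` to `R_𝕏 = S/I` of the Kähler different of
`𝕏₁ ⊆ P^m` computed from a system of generators `F` of `I_{𝕏₁}`. -/
def kdiffExtL (I : Ideal (BiRing K m n)) {r : ℕ} (F : Fin r → PRing K m) :
    Ideal (BiRing K m n ⧸ I) :=
  Ideal.span (Set.range fun ρ : Fin m → Fin r =>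
    Ideal.Quotient.mk I (rename Sum.inl (Matrix.det (Matrix.of fun u v : Fin m =>
      pderiv (Fin.succ v) (F (ρ u))))))

/-- The extension `ϑ_{𝕏₂} R_𝕏` to `R_𝕏 = S/I` of the Kähler different of
`𝕏₂ ⊆ P^n` computed from a system of generators `G` of `I_{𝕏₂}`. -/
def kdiffExtR (I : Ideal (BiRing K m n)) {r : ℕ} (G : Fin r → PRing K n) :
    Ideal (BiRing K m n ⧸ I) :=
  Ideal.span (Set.range fun ρ : Fin n → Fin r =>
    Ideal.Quotient.mk I (rename Sum.inr (Matrix.det (Matrix.of fun u v : Fin n =>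
      pderiv (Fin.succ v) (G (ρ u))))))

/- ### Regular sequences, ACM, complete intersections -/

/-- `a, b` form a regular sequence. -/
def RegPair {A : Type*} [CommRing A] (a b : A) : Prop :=
  (∀ z : A, a * z = 0 → z = 0) ∧
  (∀ z : A, b * z ∈ Ideal.span {a} → z ∈ Ideal.span {a})

/-- The image `x₀` of `X_0` in `S/I`. -/
def x0B (I : Ideal (BiRing K m n)) : BiRing K m n ⧸ I :=
  Ideal.Quotient.mk I (MvPolynomial.X (Sum.inl 0))

/-- The image `y₀` of `Y_0` in `S/I`. -/
def y0B (I : Ideal (BiRing K m n)) : BiRing K m n ⧸ I :=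
  Ideal.Quotient.mk I (MvPolynomial.X (Sum.inr 0))

/-- The standing assumption for ACM sets of points: (after a change of
coordinates) `x₀, y₀` form a regular sequence in `R_𝕏`. -/
def ACMxy (𝕏 : Finset (BiPt K m n)) : Prop :=
  RegPair (x0B K (vIdealB K 𝕏)) (y0B K (vIdealB K 𝕏))

/-- `𝕏` is arithmetically Cohen-Macaulay: some bihomogeneous linear forms
`ℓ` of degree `(1,0)` and `ℓ'` of degree `(0,1)` give a regular sequence in
`R_𝕏` (for points this is equivalent to `depth R_𝕏 = 2`). -/
def IsACM (𝕏 : Finset (BiPt K m n)) : Prop :=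
  ∃ l l' : BiRing K m n, IsBihom K l (1, 0) ∧ IsBihom K l' (0, 1) ∧
    RegPair (Ideal.Quotient.mk (vIdealB K 𝕏) l) (Ideal.Quotient.mk (vIdealB K 𝕏) l')

/-- A regular sequence in a commutative ring, given as a list:
each entry is a non-zerodivisor modulo the preceding ones, and the list
generates a proper ideal. -/
def IsRegSeq {A : Type*} [CommRing A] (l : List A) : Prop :=
  (∀ (i : ℕ) (h : i < l.length), ∀ z : A,
      l.get ⟨i, h⟩ * z ∈ Ideal.span {x | x ∈ l.take i} →
      z ∈ Ideal.span {x | x ∈ l.take i}) ∧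
  Ideal.span {x | x ∈ l} ≠ ⊤

/-- `𝕏` is a complete intersection of type `(d_1,…,d_m,d'_1,…,d'_n)`. -/
def IsCIB (𝕏 : Finset (BiPt K m n)) (d : Fin m → ℕ) (d' : Fin n → ℕ) : Prop :=
  ∃ (F : Fin m → BiRing K m n) (G : Fin n → BiRing K m n),
    (∀ i, IsBihom K (F i) ((d i : ℤ), 0)) ∧
    (∀ j, IsBihom K (G j) (0, (d' j : ℤ))) ∧
    IsRegSeq (List.ofFn F ++ List.ofFn G) ∧
    Ideal.span (Set.range F ∪ Set.range G) = vIdealB K 𝕏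

/-- `Y ⊆ P^N` is a complete intersection of type `(d_1,…,d_N)`. -/
def IsCI1 {N : ℕ} (Y : Finset (Fin (N+1) → K)) (d : Fin N → ℕ) : Prop :=
  ∃ F : Fin N → PRing K N,
    (∀ i, IsHom1 K (F i) (d i : ℤ)) ∧
    IsRegSeq (List.ofFn F) ∧
    Ideal.span (Set.range F) = vIdeal1 K Y

/- ### Separators and the Cayley-Bacharach property -/

/-- `F` is a separator of `p` in `𝕏`. -/
def IsSepB (𝕏 : Finset (BiPt K m n)) (p : BiPt K m n) (F : BiRing K m n) : Prop :=
  evalB K p F ≠ 0 ∧ ∀ q ∈ 𝕏, q ≠ p → evalB K q F = 0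

/-- The set of degrees of bihomogeneous separators of `p` in `𝕏`. -/
def sepDegsB (𝕏 : Finset (BiPt K m n)) (p : BiPt K m n) : Set (ℤ × ℤ) :=
  {d | ∃ F, IsBihom K F d ∧ IsSepB K 𝕏 p F}

/-- `deg_𝕏(p)`: the set of degrees of minimal separators of `p` in `𝕏`
(mimimality w.r.t. the componentwise order). -/
def minSepDegsB (𝕏 : Finset (BiPt K m n)) (p : BiPt K m n) : Set (ℤ × ℤ) :=
  {d ∈ sepDegsB K 𝕏 p | ∀ d' ∈ sepDegsB K 𝕏 p, ¬ d' < d}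

/-- `𝕏` has the Cayley-Bacharach property: the Hilbert function of
`𝕏 \ {p}` is independent of the choice of `p ∈ 𝕏`. -/
def HasCB (𝕏 : Finset (BiPt K m n)) : Prop :=
  ∀ p ∈ 𝕏, ∀ q ∈ 𝕏, ∀ d : ℤ × ℤ, HFB K (𝕏.erase p) d = HFB K (𝕏.erase q) d

/- ### Star property and fibres -/

/-- The `(⋆)`-property. -/
def StarProp (𝕏 : Finset (BiPt K m n)) : Prop :=
  ∀ p ∈ 𝕏, ∀ q ∈ 𝕏, ((p.1, q.2) ∈ 𝕏 ∨ (q.1, p.2) ∈ 𝕏)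

/-- `V_j = π₁(π₂⁻¹(q'_j) ∩ 𝕏)` for `q'_j = p.2`. -/
def Vset (𝕏 : Finset (BiPt K m n)) (p : BiPt K m n) : Finset (Fin (m+1) → K) :=
  (𝕏.filter fun q => q.2 = p.2).image Prod.fst

/-- `W_i = π₂(π₁⁻¹(q_i) ∩ 𝕏)` for `q_i = p.1`. -/
def Wset (𝕏 : Finset (BiPt K m n)) (p : BiPt K m n) : Finset (Fin (n+1) → K) :=
  (𝕏.filter fun q => q.1 = p.1).image Prod.snd

end MultiProjPoints

/- A point `p = (x, y)` with `x₀, y₀ ≠ 0` has coordinates cut out by the linear forms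
`x₀ X_i - x_i X₀` and `y₀ Y_j - y_j Y₀`. Let `S`, of degree `(s₁ - 1, 0)`, be a product of linear
forms separating `x` from the other points of `𝕏₁`, and `T` likewise for `y`. Then all
`S (x₀ X_i - x_i X₀)` and `T (y₀ Y_j - y_j Y₀)` lie in `I_𝕏`, and their Jacobian matrix at `p` is
diagonal with nonzero entries, so its determinant `D` gives an element of `ϑ_𝕏` of degree
`(m (s₁ - 1), n (s₂ - 1))` that does not vanish at `p`. Multiplying `S T D` by powers of `X₀` and
`Y₀` yields separators of `p` inside `ϑ_𝕏`, in every degree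
`⪰ ((s₁ - 1)(m + 1), (s₂ - 1)(n + 1))`.

Regularity of `x₀, y₀` in `R_𝕏` forces them to be nonzero at every point `p`: a coordinate that
vanishes at `p` kills the separators of `p`, which is impossible for `x₀`, while for `y₀` it would
make them divisible by all powers of `x₀`, against their degree. -/

namespace MultiProjPoints

section MinorForm

variable {R σ : Type*} [CommRing R]

/-- The linear form `x_t X_s - x_s X_t`, that is, the minor of the two-rowed matrix with rows
`X` and `x` on the columns `s`, `t`. Such forms cut out the multiples of `x`. -/
def minorForm (x : σ → R) (s t : σ) : MvPolynomial σ R :=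
  C (x t) * X s - C (x s) * X t

lemma eval_minorForm (x y : σ → R) (s t : σ) :
    eval y (minorForm x s t) = x t * y s - x s * y t := by
  simp [minorForm]

lemma eval_minorForm_of_eq {x y : σ → R} {s t : σ} (hs : y s = x s) (ht : y t = x t) :
    eval y (minorForm x s t) = 0 := by
  rw [eval_minorForm, hs, ht, mul_comm, sub_self]

lemma isWeightedHomogeneous_minorForm {M : Type*} [AddCommMonoid M] {w : σ → M} (x : σ → R)
    {s t : σ} (hst : w t = w s) :
    IsWeightedHomogeneous w (minorForm x s t) (w s) :=
  ((isWeightedHomogeneous_X R w s).C_mul _).sub (hst ▸ (isWeightedHomogeneous_X R w t).C_mul _)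

lemma pderiv_minorForm [DecidableEq σ] (x : σ → R) {s t u : σ} (hut : u ≠ t) :
    pderiv u (minorForm x s t) = if s = u then C (x t) else 0 := by
  rw [minorForm, map_sub, pderiv_C_mul, pderiv_C_mul, pderiv_X_of_ne hut.symm, mul_zero, sub_zero]
  split_ifs with hsu
  · rw [hsu, pderiv_X_self, mul_one]
  · rw [pderiv_X_of_ne hsu, mul_zero]

lemma exists_eval_minorForm_ne_zero {K : Type*} [Field K] {x y : σ → K} (hx : x ≠ 0)
    (hxy : ∀ c : K, y ≠ c • x) : ∃ s t, eval y (minorForm x s t) ≠ 0 := by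
  by_contra! hzero
  obtain ⟨t, ht⟩ := Function.ne_iff.mp hx
  refine hxy (y t / x t) (funext fun s => ?_)
  have hminor := hzero s t
  rw [eval_minorForm] at hminor
  rw [Pi.smul_apply, smul_eq_mul, div_mul_eq_mul_div, eq_div_iff ht]
  linear_combination hminor

lemma exists_separator_of_forall_ne_smul {K : Type*} [Field K] (Y : Finset (σ → K)) {x : σ → K}
    (hY : ∀ y ∈ Y, y ≠ 0 ∧ ∀ c : K, x ≠ c • y) :
    ∃ S : MvPolynomial σ K,
      S.IsHomogeneous Y.card ∧ eval x S ≠ 0 ∧ ∀ y ∈ Y, eval y S = 0 := by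
  have hform : ∀ y ∈ Y, ∃ L : MvPolynomial σ K,
      L.IsHomogeneous 1 ∧ eval x L ≠ 0 ∧ eval y L = 0 := fun y hy => by
    obtain ⟨s, t, hst⟩ := exists_eval_minorForm_ne_zero (hY y hy).1 (hY y hy).2
    exact ⟨minorForm y s t, isWeightedHomogeneous_minorForm y rfl, hst,
      eval_minorForm_of_eq rfl rfl⟩
  choose! L hL hLx hLy using hform
  refine ⟨∏ y ∈ Y, L y, ?_, ?_, fun y hy => ?_⟩
  · simpa using IsHomogeneous.prod Y L (fun _ => 1) hL
  · rw [map_prod, Finset.prod_ne_zero_iff]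
    exact hLx
  · rw [map_prod]
    exact Finset.prod_eq_zero hy (hLy y hy)

end MinorForm

section WeightedHomogeneous

variable {R σ τ ι M : Type*}

lemma isWeightedHomogeneous_rename_of_isHomogeneous [CommSemiring R] [AddCommMonoid M]
    {f : σ → τ} {w : τ → M} {δ : M} (hw : ∀ i, w (f i) = δ) {F : MvPolynomial σ R} {d : ℕ}
    (hF : F.IsHomogeneous d) : IsWeightedHomogeneous w (rename f F) (d • δ) := by
  intro c hc
  obtain ⟨u, rfl, hu⟩ := coeff_rename_ne_zero f F c hc
  have hdeg : ∑ i ∈ u.support, u i = d := by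
    simpa [Finsupp.weight_apply, Finsupp.sum] using hF hu
  rw [Finsupp.weight_apply, Finsupp.sum_mapDomain_index (by simp) (by simp [add_smul])]
  simp only [hw]
  rw [Finsupp.sum, ← Finset.sum_smul, hdeg]

lemma isWeightedHomogeneous_det [CommRing R] [AddCommGroup M] [Fintype ι] [DecidableEq ι]
    {w : σ → M} {A : Matrix ι ι (MvPolynomial σ R)} {e f : ι → M}
    (hA : ∀ i j, IsWeightedHomogeneous w (A i j) (e i - f j)) :
    IsWeightedHomogeneous w A.det (∑ i, e i - ∑ i, f i) := by
  rw [← mem_weightedHomogeneousSubmodule, Matrix.det_apply]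
  refine Submodule.sum_mem _ fun τ _ => zsmul_mem ?_ _
  have hprod := IsWeightedHomogeneous.prod Finset.univ (fun i => A (τ i) i)
    (fun i => e (τ i) - f i) fun i _ => hA (τ i) i
  rwa [Finset.sum_sub_distrib, Equiv.sum_comp τ e] at hprod

/-- The substitution `X_s ↦ x_s T ^ w_s`, which restricts a polynomial to the orbit of `x` under
the multiplicative group acting with weights `w`. -/
def orbitHom [CommSemiring R] (w : σ → ℕ) (x : σ → R) : MvPolynomial σ R →ₐ[R] Polynomial R :=
  aeval fun s => Polynomial.C (x s) * Polynomial.X ^ w s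

lemma orbitHom_of_isWeightedHomogeneous [CommSemiring R] {w : σ → ℕ} (x : σ → R)
    {F : MvPolynomial σ R} {d : ℕ} (hF : IsWeightedHomogeneous w F d) :
    orbitHom w x F = Polynomial.C (eval x F) * Polynomial.X ^ d := by
  rw [orbitHom, aeval_def, eval₂_eq, eval_eq, map_sum, Finset.sum_mul]
  refine Finset.sum_congr rfl fun c hc => ?_
  have hweight : ∑ s ∈ c.support, w s * c s = d := by
    simpa [Finsupp.weight_apply, Finsupp.sum, mul_comm] using hF (mem_support_iff.mp hc)
  simp only [mul_pow, ← pow_mul, Finset.prod_mul_distrib, Finset.prod_pow_eq_pow_sum, hweight,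
    map_mul, map_prod, map_pow, Polynomial.algebraMap_eq, mul_assoc]

end WeightedHomogeneous

section Jacobian

variable {R σ ι κ : Type*} [CommRing R]

lemma det_mem_span_minors [Fintype ι] [DecidableEq ι] [Finite κ] (N : κ → ι → R) {A : Matrix ι ι R}
    (hA : ∀ i, A i ∈ Submodule.span R (Set.range N)) :
    A.det ∈ Ideal.span (Set.range fun ρ : ι → κ => (Matrix.of fun i => N (ρ i)).det) := by
  have := Fintype.ofFinite κ
  choose c hc using fun i => (Submodule.mem_span_range_iff_exists_fun R).mp (hA i)
  have hdet : A.det = ∑ ρ : ι → κ, (∏ i, c i (ρ i)) * (Matrix.of fun i => N (ρ i)).det := by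
    obtain rfl : (fun i => ∑ k, c i k • N k) = A := funext hc
    refine (Matrix.detRowAlternating.toMultilinearMap.map_sum fun i k => c i k • N k).trans ?_
    exact Finset.sum_congr rfl fun ρ _ => MultilinearMap.map_smul_univ _ _ _
  rw [hdet]
  exact Ideal.sum_mem _ fun ρ _ => Ideal.mul_mem_left _ _ (Ideal.subset_span ⟨ρ, rfl⟩)

/-- By the Leibniz rule, the gradient of an element of `I` is modulo `I` a linear combination of
the gradients of the generators. -/
lemma mk_gradient_mem_span [Finite κ] {I : Ideal (MvPolynomial σ R)}
    {F : κ → MvPolynomial σ R} (hF : Ideal.span (Set.range F) = I) (v : ι → σ)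
    {G : MvPolynomial σ R} (hG : G ∈ I) :
    (fun i => Ideal.Quotient.mk I (pderiv (v i) G)) ∈
      Submodule.span (MvPolynomial σ R ⧸ I)
        (Set.range fun k i => Ideal.Quotient.mk I (pderiv (v i) (F k))) := by
  have := Fintype.ofFinite κ
  have hFI (k : κ) : Ideal.Quotient.mk I (F k) = 0 :=
    Ideal.Quotient.eq_zero_iff_mem.mpr (hF ▸ Ideal.subset_span ⟨k, rfl⟩)
  obtain ⟨c, rfl⟩ := Ideal.mem_span_range_iff_exists_fun.mp (hF ▸ hG)
  refine (Submodule.mem_span_range_iff_exists_fun _).mpr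
    ⟨fun k => Ideal.Quotient.mk I (c k), funext fun i => ?_⟩
  simp [Derivation.leibniz, hFI]

lemma eval_det_pderiv_mul_minorForm [Fintype ι] [DecidableEq ι] {v : ι → σ}
    (hv : Function.Injective v) {b : ι → σ} (hb : ∀ i j, v i ≠ b j)
    (U : ι → MvPolynomial σ R) (x : σ → R) :
    eval x (Matrix.of fun i j => pderiv (v j) (U i * minorForm x (v i) (b i))).det =
      ∏ i, eval x (U i) * x (b i) := by
  classical
  rw [RingHom.map_det, ← Matrix.det_diagonal]
  congr 1
  ext i j
  have hzero : eval x (minorForm x (v i) (b i)) = 0 := eval_minorForm_of_eq rfl rfl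
  rw [RingHom.mapMatrix_apply, Matrix.map_apply, Matrix.of_apply, Derivation.leibniz,
    pderiv_minorForm x (hb j i), Matrix.diagonal_apply]
  by_cases hij : i = j
  · subst hij
    simp [hzero]
  · simp [hij, hv.eq_iff, hzero]

end Jacobian

lemma RegPair.pow_dvd_of_mul_eq_zero {A : Type*} [CommRing A] {a b z : A} (h : RegPair a b)
    (hz : b * z = 0) (k : ℕ) : a ^ k ∣ z := by
  suffices ∃ w, z = a ^ k * w ∧ b * w = 0 from this.imp fun _ hw => hw.1
  induction k with
  | zero => exact ⟨z, by rw [pow_zero, one_mul], hz⟩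
  | succ k ih =>
    obtain ⟨w, rfl, hw⟩ := ih
    obtain ⟨u, rfl⟩ := Ideal.mem_span_singleton.mp (h.2 w (hw ▸ zero_mem _))
    exact ⟨u, by ring, h.1 _ (by rw [← hw]; ring)⟩

section Points

variable {K : Type} [Field K] {m n : ℕ} {𝕏 : Finset (BiPt K m n)} {p : BiPt K m n}
  {F : BiRing K m n} {d : ℤ × ℤ}

lemma evalB_mul (p : BiPt K m n) (F G : BiRing K m n) :
    evalB K p (F * G) = evalB K p F * evalB K p G :=
  map_mul _ _ _

lemma mem_vIdealB_of_isBihom (hF : IsBihom K F d) (h : ∀ p ∈ 𝕏, evalB K p F = 0) :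
    F ∈ vIdealB K 𝕏 :=
  Ideal.subset_span ⟨⟨d, hF⟩, h⟩

lemma evalB_eq_zero_of_mem_vIdealB (hF : F ∈ vIdealB K 𝕏) (hp : p ∈ 𝕏) : evalB K p F = 0 := by
  have hle : vIdealB K 𝕏 ≤ RingHom.ker (eval (Sum.elim p.1 p.2)) :=
    Ideal.span_le.mpr fun _ hG => hG.2 p hp
  exact hle hF

lemma isBihom_rename_inl {F : PRing K m} {a : ℕ} (hF : F.IsHomogeneous a) :
    IsBihom K (rename Sum.inl F : BiRing K m n) (a, 0) := by
  simpa [IsBihom] using isWeightedHomogeneous_rename_of_isHomogeneous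
    (w := biwt m n) (f := Sum.inl) (fun _ => rfl) hF

lemma isBihom_rename_inr {F : PRing K n} {b : ℕ} (hF : F.IsHomogeneous b) :
    IsBihom K (rename Sum.inr F : BiRing K m n) (0, b) := by
  simpa [IsBihom] using isWeightedHomogeneous_rename_of_isHomogeneous
    (w := biwt m n) (f := Sum.inr) (fun _ => rfl) hF

lemma evalB_rename_inl (p : BiPt K m n) (F : PRing K m) :
    evalB K p (rename Sum.inl F) = eval p.1 F := by
  rw [evalB, eval_rename, Sum.elim_comp_inl]

lemma evalB_rename_inr (p : BiPt K m n) (F : PRing K n) :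
    evalB K p (rename Sum.inr F) = eval p.2 F := by
  rw [evalB, eval_rename, Sum.elim_comp_inr]

lemma isSepB_mul {S T : BiRing K m n} (hSp : evalB K p S ≠ 0)
    (hSq : ∀ q ∈ 𝕏, q.1 ≠ p.1 → evalB K q S = 0) (hTp : evalB K p T ≠ 0)
    (hTq : ∀ q ∈ 𝕏, q.2 ≠ p.2 → evalB K q T = 0) : IsSepB K 𝕏 p (S * T) := by
  refine ⟨by rw [evalB_mul]; exact mul_ne_zero hSp hTp, fun q hq hqp => ?_⟩
  rw [evalB_mul]
  by_cases hfst : q.1 = p.1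
  · rw [hTq q hq fun hsnd => hqp (Prod.ext hfst hsnd), mul_zero]
  · rw [hSq q hq hfst, zero_mul]

end Points

section HilbertFunction

lemma surjective_of_exists_separator {K V ι : Type*} [Field K] [AddCommGroup V] [Module K V]
    [Finite ι] (f : V →ₗ[K] ι → K) (h : ∀ i, ∃ v, f v i ≠ 0 ∧ ∀ j ≠ i, f v j = 0) :
    Function.Surjective f := by
  classical
  rw [← LinearMap.range_eq_top, eq_top_iff, ← (Pi.basisFun K ι).span_eq, Submodule.span_le]
  rintro _ ⟨i, rfl⟩
  obtain ⟨v, hvi, hvj⟩ := h i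
  refine ⟨(f v i)⁻¹ • v, funext fun j => ?_⟩
  rw [map_smul, Pi.smul_apply, Pi.basisFun_apply, smul_eq_mul]
  by_cases hj : j = i
  · rw [hj, Pi.single_eq_same, inv_mul_cancel₀ hvi]
  · rw [hvj j hj, mul_zero, Pi.single_eq_of_ne hj]

variable {K : Type} [Field K] {m n : ℕ}

/-- Evaluation of elements of the coordinate ring `R_𝕏` at the chosen representatives of the points
of `𝕏`. On each graded piece it is injective, which turns Hilbert functions into ranks of
evaluation maps. -/
def evalPoints (𝕏 : Finset (BiPt K m n)) : (BiRing K m n ⧸ vIdealB K 𝕏) →ₐ[K] (𝕏 → K) :=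
  Ideal.Quotient.liftₐ (vIdealB K 𝕏)
    (AlgHom.pi fun p => aeval (Sum.elim p.1.1 p.1.2))
    fun _ hF => funext fun p => evalB_eq_zero_of_mem_vIdealB hF p.2

lemma eq_zero_of_mem_degPieceB {𝕏 : Finset (BiPt K m n)} {d : ℤ × ℤ}
    {z : BiRing K m n ⧸ vIdealB K 𝕏} (hz : z ∈ degPieceB K (vIdealB K 𝕏) d)
    (h : evalPoints 𝕏 z = 0) : z = 0 := by
  obtain ⟨F, hF, rfl⟩ := hz
  exact Ideal.Quotient.eq_zero_iff_mem.mpr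
    (mem_vIdealB_of_isBihom hF fun p hp => congrFun h ⟨p, hp⟩)

lemma HFIdealB_eq_card_of_exists_isSepB {𝕏 : Finset (BiPt K m n)} {d : ℤ × ℤ}
    {J : Ideal (BiRing K m n ⧸ vIdealB K 𝕏)}
    (h : ∀ p ∈ 𝕏, ∃ F, IsBihom K F d ∧ IsSepB K 𝕏 p F ∧ Ideal.Quotient.mk (vIdealB K 𝕏) F ∈ J) :
    HFIdealB K (vIdealB K 𝕏) J d = 𝕏.card := by
  let f := (evalPoints 𝕏).toLinearMap.domRestrict
    (J.restrictScalars K ⊓ degPieceB K (vIdealB K 𝕏) d)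
  have hinj : Function.Injective f :=
    (injective_iff_map_eq_zero f).mpr fun z hz =>
      Subtype.ext (eq_zero_of_mem_degPieceB z.2.2 hz)
  have hsurj : Function.Surjective f := surjective_of_exists_separator f fun p => by
    obtain ⟨F, hF, ⟨hFp, hFq⟩, hFJ⟩ := h p.1 p.2
    exact ⟨⟨_, hFJ, F, hF, rfl⟩, hFp, fun q hq => hFq q.1 q.2 (Subtype.coe_ne_coe.mpr hq)⟩
  rw [HFIdealB, (LinearEquiv.ofBijective f ⟨hinj, hsurj⟩).finrank_eq,
    Module.finrank_fintype_fun_eq_card, Fintype.card_coe]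

end HilbertFunction

section Separators

variable {K : Type} [Field K] [DecidableEq K] {m n : ℕ} {𝕏 : Finset (BiPt K m n)} {p : BiPt K m n}

lemma GoodConfig.exists_fst_separator (h : GoodConfig K 𝕏) (hp : p ∈ 𝕏) :
    ∃ S, IsBihom K S (((𝕏.image Prod.fst).card : ℤ) - 1, 0) ∧ evalB K p S ≠ 0 ∧
      ∀ q ∈ 𝕏, q.1 ≠ p.1 → evalB K q S = 0 := by
  obtain ⟨S, hS, hSp, hSq⟩ := exists_separator_of_forall_ne_smul
    (Y := (𝕏.image Prod.fst).erase p.1) (x := p.1) (by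
      simp only [Finset.mem_erase, Finset.mem_image]
      rintro _ ⟨hne, q, hq, rfl⟩
      refine ⟨(h.1 q hq).1, fun c hc => hne (h.2.1 p hp q hq ⟨c, ?_, hc⟩).symm⟩
      rintro rfl
      exact (h.1 p hp).1 (by rw [hc, zero_smul]))
  refine ⟨rename Sum.inl S, ?_, by rwa [evalB_rename_inl], fun q hq hne => ?_⟩
  · rw [← Finset.cast_card_erase_of_mem (Finset.mem_image_of_mem _ hp)]
    exact isBihom_rename_inl hS
  · rw [evalB_rename_inl]
    exact hSq _ (Finset.mem_erase.mpr ⟨hne, Finset.mem_image_of_mem _ hq⟩)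

lemma GoodConfig.exists_snd_separator (h : GoodConfig K 𝕏) (hp : p ∈ 𝕏) :
    ∃ T, IsBihom K T (0, ((𝕏.image Prod.snd).card : ℤ) - 1) ∧ evalB K p T ≠ 0 ∧
      ∀ q ∈ 𝕏, q.2 ≠ p.2 → evalB K q T = 0 := by
  obtain ⟨T, hT, hTp, hTq⟩ := exists_separator_of_forall_ne_smul
    (Y := (𝕏.image Prod.snd).erase p.2) (x := p.2) (by
      simp only [Finset.mem_erase, Finset.mem_image]
      rintro _ ⟨hne, q, hq, rfl⟩
      refine ⟨(h.1 q hq).2, fun c hc => hne (h.2.2 p hp q hq ⟨c, ?_, hc⟩).symm⟩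
      rintro rfl
      exact (h.1 p hp).2 (by rw [hc, zero_smul]))
  refine ⟨rename Sum.inr T, ?_, by rwa [evalB_rename_inr], fun q hq hne => ?_⟩
  · rw [← Finset.cast_card_erase_of_mem (Finset.mem_image_of_mem _ hp)]
    exact isBihom_rename_inr hT
  · rw [evalB_rename_inr]
    exact hTq _ (Finset.mem_erase.mpr ⟨hne, Finset.mem_image_of_mem _ hq⟩)

end Separators

section ACM

variable {K : Type} [Field K] {m n : ℕ} {𝕏 : Finset (BiPt K m n)} {p : BiPt K m n}
  {F G : BiRing K m n} {d e : ℤ × ℤ}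

lemma IsSepB.mk_mul_mk_eq_zero (hFp : IsSepB K 𝕏 p F) (hF : IsBihom K F d) (hG : IsBihom K G e)
    (hGp : evalB K p G = 0) :
    Ideal.Quotient.mk (vIdealB K 𝕏) G * Ideal.Quotient.mk (vIdealB K 𝕏) F = 0 := by
  rw [← map_mul, Ideal.Quotient.eq_zero_iff_mem]
  refine mem_vIdealB_of_isBihom (hG.mul hF) fun q hq => ?_
  rw [evalB_mul]
  by_cases hqp : q = p
  · rw [hqp, hGp, zero_mul]
  · rw [hFp.2 q hq hqp, mul_zero]

lemma IsBihom.isWeightedHomogeneous_fst (hF : IsBihom K F d) :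
    IsWeightedHomogeneous (Sum.elim 1 0 : Fin (m + 1) ⊕ Fin (n + 1) → ℕ) F d.1.toNat := by
  intro c hc
  have hweight : ((Finsupp.weight (Sum.elim 1 0 : Fin (m + 1) ⊕ Fin (n + 1) → ℕ) c : ℕ) : ℤ) =
      d.1 := by
    rw [← hF hc]
    simp [Finsupp.weight_apply, Finsupp.sum_fintype, biwt, Fintype.sum_sum_type, Prod.fst_sum]
  rw [← hweight, Int.toNat_natCast]

lemma vIdealB_le_ker_orbitHom (hp : p ∈ 𝕏) :
    vIdealB K 𝕏 ≤ RingHom.ker (orbitHom (Sum.elim 1 0) (Sum.elim p.1 p.2)) :=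
  Ideal.span_le.mpr fun F ⟨⟨_, hF⟩, hF0⟩ => by
    have hFp : eval (Sum.elim p.1 p.2) F = 0 := hF0 p hp
    rw [SetLike.mem_coe, RingHom.mem_ker,
      orbitHom_of_isWeightedHomogeneous _ hF.isWeightedHomogeneous_fst, hFp, map_zero, zero_mul]

/-- On the line `t ↦ (t x, y)` through `p = (x, y)`, a form of degree `d` is a constant times
`t ^ d.1`, whereas `x₀ ^ k` is divisible by `t ^ k`. -/
lemma evalB_eq_zero_of_forall_x0B_pow_dvd (hp : p ∈ 𝕏) (hF : IsBihom K F d)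
    (h : ∀ k : ℕ, x0B K (vIdealB K 𝕏) ^ k ∣ Ideal.Quotient.mk (vIdealB K 𝕏) F) :
    evalB K p F = 0 := by
  set φ := orbitHom (Sum.elim 1 0) (Sum.elim p.1 p.2) with hφ
  have hdvd : φ (X (Sum.inl 0)) ^ (d.1.toNat + 1) ∣ φ F := by
    have hmap := map_dvd (Ideal.Quotient.lift (vIdealB K 𝕏) (φ : BiRing K m n →+* Polynomial K)
      (vIdealB_le_ker_orbitHom hp)) (h (d.1.toNat + 1))
    rwa [map_pow] at hmap
  have hX : Polynomial.X ∣ φ (X (Sum.inl 0)) := by simp [hφ, orbitHom]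
  have hcoeff := Polynomial.X_pow_dvd_iff.mp ((pow_dvd_pow_of_dvd hX _).trans hdvd) d.1.toNat
    (Nat.lt_succ_self _)
  rwa [hφ, orbitHom_of_isWeightedHomogeneous _ hF.isWeightedHomogeneous_fst,
    Polynomial.coeff_C_mul_X_pow, if_pos rfl] at hcoeff

lemma ACMxy.coord_zero_ne_zero (h : ACMxy K 𝕏) (hgood : GoodConfig K 𝕏) (hp : p ∈ 𝕏) :
    p.1 0 ≠ 0 ∧ p.2 0 ≠ 0 := by
  classical
  obtain ⟨S, hS, hSp, hSq⟩ := hgood.exists_fst_separator hp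
  obtain ⟨T, hT, hTp, hTq⟩ := hgood.exists_snd_separator hp
  have hsep : IsSepB K 𝕏 p (S * T) := isSepB_mul hSp hSq hTp hTq
  have hvanish (s) (hs : evalB K p (X s) = 0) :=
    hsep.mk_mul_mk_eq_zero (hS.mul hT) (isWeightedHomogeneous_X K (biwt m n) s) hs
  refine ⟨fun hx => hsep.1 ?_, fun hy => hsep.1 ?_⟩
  · have hzero := h.1 _ (hvanish (Sum.inl 0) (by simpa [evalB] using hx))
    exact evalB_eq_zero_of_mem_vIdealB (Ideal.Quotient.eq_zero_iff_mem.mp hzero) hp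
  · exact evalB_eq_zero_of_forall_x0B_pow_dvd hp (hS.mul hT)
      (h.pow_dvd_of_mul_eq_zero (hvanish (Sum.inr 0) (by simpa [evalB] using hy)))

end ACM

section KahlerDifferent

variable {K : Type} [Field K] {m n : ℕ} {𝕏 : Finset (BiPt K m n)} {p : BiPt K m n}
  {S T : BiRing K m n} {a b : ℤ}

lemma mk_det_pderiv_mem_kdiffB {I : Ideal (BiRing K m n)} {r : ℕ} {H : Fin r → BiRing K m n}
    (hH : Ideal.span (Set.range H) = I) {G : Fin (m + n) → BiRing K m n} (hG : ∀ u, G u ∈ I) :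
    Ideal.Quotient.mk I (Matrix.of fun u v => pderiv (bvar m n v) (G u)).det ∈ kdiffB K I H := by
  rw [RingHom.map_det]
  have hdet := det_mem_span_minors _ fun u => mk_gradient_mem_span hH (bvar m n) (hG u)
  simp only [kdiffB, RingHom.map_det]
  exact hdet

lemma bvar_eq_map_succ (v : Fin (m + n)) :
    bvar m n v = Sum.map Fin.succ Fin.succ (finSumFinEquiv.symm v) := by
  obtain ⟨w | w, rfl⟩ := finSumFinEquiv.surjective v <;> simp [bvar, Fin.ext_iff]

lemma bvar_injective : Function.Injective (bvar m n) := by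
  rw [funext bvar_eq_map_succ]
  exact (Sum.map_injective.mpr ⟨Fin.succ_injective m, Fin.succ_injective n⟩).comp
    finSumFinEquiv.symm.injective

/-- The homogenizing variable `X_0` or `Y_0` of the block of variables to which `s` belongs. -/
def baseVar (s : Fin (m + 1) ⊕ Fin (n + 1)) : Fin (m + 1) ⊕ Fin (n + 1) :=
  s.map (fun _ => 0) (fun _ => 0)

lemma bvar_ne_baseVar (u : Fin (m + n)) (s : Fin (m + 1) ⊕ Fin (n + 1)) :
    bvar m n u ≠ baseVar s := by
  rw [bvar_eq_map_succ]
  rcases finSumFinEquiv.symm u <;> rcases s <;> simp [baseVar]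

/-- The form `S (x₀ X_i - x_i X₀)` or `T (y₀ Y_j - y_j Y₀)` attached to the variable `s = X_i` or
`s = Y_j` and the point `p = (x, y)`. -/
def fiberForm (S T : BiRing K m n) (p : BiPt K m n) (s : Fin (m + 1) ⊕ Fin (n + 1)) :
    BiRing K m n :=
  s.elim (fun _ => S) (fun _ => T) * minorForm (Sum.elim p.1 p.2) s (baseVar s)

lemma isBihom_fiberForm (hS : IsBihom K S (a, 0)) (hT : IsBihom K T (0, b)) (p : BiPt K m n)
    (s : Fin (m + 1) ⊕ Fin (n + 1)) :
    IsBihom K (fiberForm S T p s)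
      (s.elim (fun _ => (a, 0)) (fun _ => (0, b)) + biwt m n s) := by
  rcases s with i | j
  · exact hS.mul (isWeightedHomogeneous_minorForm _ rfl)
  · exact hT.mul (isWeightedHomogeneous_minorForm _ rfl)

lemma fiberForm_mem_vIdealB (hS : IsBihom K S (a, 0)) (hT : IsBihom K T (0, b))
    (hSq : ∀ q ∈ 𝕏, q.1 ≠ p.1 → evalB K q S = 0) (hTq : ∀ q ∈ 𝕏, q.2 ≠ p.2 → evalB K q T = 0)
    (s : Fin (m + 1) ⊕ Fin (n + 1)) : fiberForm S T p s ∈ vIdealB K 𝕏 := by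
  refine mem_vIdealB_of_isBihom (isBihom_fiberForm hS hT p s) fun q hq => ?_
  rw [fiberForm, evalB_mul]
  rcases s with i | j
  · by_cases hfst : q.1 = p.1
    · exact mul_eq_zero_of_right _
        (eval_minorForm_of_eq (congrFun hfst i) (congrFun hfst 0))
    · exact mul_eq_zero_of_left (hSq q hq hfst) _
  · by_cases hsnd : q.2 = p.2
    · exact mul_eq_zero_of_right _
        (eval_minorForm_of_eq (congrFun hsnd j) (congrFun hsnd 0))
    · exact mul_eq_zero_of_left (hTq q hq hsnd) _

lemma isBihom_det_pderiv_fiberForm (hS : IsBihom K S (a, 0)) (hT : IsBihom K T (0, b))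
    (p : BiPt K m n) :
    IsBihom K (Matrix.of fun u v => pderiv (bvar m n v) (fiberForm S T p (bvar m n u))).det
      (m * a, n * b) := by
  have hdet := isWeightedHomogeneous_det (e := fun u => _) (f := fun v => biwt m n (bvar m n v))
    fun u v => (isBihom_fiberForm hS hT p (bvar m n u)).pderiv
      (sub_add_cancel _ (biwt m n (bvar m n v)))
  have hdeg : ∑ u : Fin (m + n), (bvar m n u).elim (fun _ => (a, 0)) (fun _ => (0, b)) =
      (m * a, n * b) := by
    simp [bvar_eq_map_succ, Fin.sum_univ_add]
  rwa [Finset.sum_add_distrib, add_sub_cancel_right, hdeg] at hdet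

lemma evalB_det_pderiv_fiberForm_ne_zero (hp : p.1 0 ≠ 0 ∧ p.2 0 ≠ 0) (hSp : evalB K p S ≠ 0)
    (hTp : evalB K p T ≠ 0) :
    evalB K p
      (Matrix.of fun u v => pderiv (bvar m n v) (fiberForm S T p (bvar m n u))).det ≠ 0 := by
  have hdet := eval_det_pderiv_mul_minorForm bvar_injective (b := fun u => baseVar (bvar m n u))
    (fun u v => bvar_ne_baseVar u (bvar m n v))
    (fun u => (bvar m n u).elim (fun _ => S) (fun _ => T)) (Sum.elim p.1 p.2)
  refine hdet.trans_ne (Finset.prod_ne_zero_iff.mpr fun u _ => ?_)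
  rcases bvar m n u with i | j
  · exact mul_ne_zero hSp hp.1
  · exact mul_ne_zero hTp hp.2

lemma exists_isSepB_mem_kdiffB [DecidableEq K] (hgood : GoodConfig K 𝕏) (hp : p ∈ 𝕏)
    (hp0 : p.1 0 ≠ 0 ∧ p.2 0 ≠ 0) {r : ℕ} {H : Fin r → BiRing K m n}
    (hH : Ideal.span (Set.range H) = vIdealB K 𝕏) {i j : ℤ}
    (hi : (((𝕏.image Prod.fst).card : ℤ) - 1) * (m + 1) ≤ i)
    (hj : (((𝕏.image Prod.snd).card : ℤ) - 1) * (n + 1) ≤ j) :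
    ∃ F, IsBihom K F (i, j) ∧ IsSepB K 𝕏 p F ∧
      Ideal.Quotient.mk (vIdealB K 𝕏) F ∈ kdiffB K (vIdealB K 𝕏) H := by
  obtain ⟨S, hS, hSp, hSq⟩ := hgood.exists_fst_separator hp
  obtain ⟨T, hT, hTp, hTq⟩ := hgood.exists_snd_separator hp
  obtain ⟨α, hα⟩ := Int.le.dest hi
  obtain ⟨β, hβ⟩ := Int.le.dest hj
  set D := (Matrix.of fun u v => pderiv (bvar m n v) (fiberForm S T p (bvar m n u))).det
  have hD : IsBihom K D _ := isBihom_det_pderiv_fiberForm hS hT p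
  have hX (s) : IsBihom K (X s) (biwt m n s) := isWeightedHomogeneous_X K (biwt m n) s
  have hsep : IsSepB K 𝕏 p (S * T) := isSepB_mul hSp hSq hTp hTq
  refine ⟨X (Sum.inl 0) ^ α * X (Sum.inr 0) ^ β * D * (S * T), ?_, ⟨?_, fun q hq hqp => ?_⟩, ?_⟩
  · have hprod := ((((hX (Sum.inl 0)).pow α).mul ((hX (Sum.inr 0)).pow β)).mul hD).mul (hS.mul hT)
    rw [IsBihom]
    convert hprod using 1
    ext <;> simp [biwt, ← hα, ← hβ] <;> ring
  · have hXY : evalB K p (X (Sum.inl 0) ^ α * X (Sum.inr 0) ^ β) ≠ 0 := by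
      simp [evalB, hp0]
    rw [evalB_mul, evalB_mul]
    exact mul_ne_zero
      (mul_ne_zero hXY (evalB_det_pderiv_fiberForm_ne_zero hp0 hSp hTp)) hsep.1
  · rw [evalB_mul, hsep.2 q hq hqp, mul_zero]
  · rw [mul_right_comm, map_mul]
    exact Ideal.mul_mem_left _ _
      (mk_det_pderiv_mem_kdiffB hH fun u => fiberForm_mem_vIdealB hS hT hSq hTq (bvar m n u))

end KahlerDifferent

end MultiProjPoints

open MultiProjPoints in
theorem statement_7_general {K : Type} [Field K] [DecidableEq K] {m n : ℕ}
    {𝕏 : Finset (BiPt K m n)} (hgood : GoodConfig K 𝕏)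
    (h𝕏 : ∀ p ∈ 𝕏, p.1 0 ≠ 0 ∧ p.2 0 ≠ 0) {r : ℕ} {H : Fin r → BiRing K m n}
    (hH : Ideal.span (Set.range H) = vIdealB K 𝕏) {i j : ℤ}
    (hi : (((𝕏.image Prod.fst).card : ℤ) - 1) * (m + 1) ≤ i)
    (hj : (((𝕏.image Prod.snd).card : ℤ) - 1) * (n + 1) ≤ j) :
    HFIdealB K (vIdealB K 𝕏) (kdiffB K (vIdealB K 𝕏) H) (i, j) = 𝕏.card :=
  HFIdealB_eq_card_of_exists_isSepB fun p hp =>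
    exists_isSepB_mem_kdiffB hgood hp (h𝕏 p hp) hH hi hj

open MultiProjPoints in
/-- Corollary 3.4: `HF_{ϑ_𝕏}(i,j) = s` for all
`(i,j) ⪰ ((s₁-1)(m+2), (s₂-1)(n+2))`. -/
theorem statement_7 (K : Type) [Field K] [CharZero K] [DecidableEq K]
    (m n : ℕ) (𝕏 : Finset (BiPt K m n)) (hgood : GoodConfig K 𝕏)
    (hne : 𝕏.Nonempty) (hACM : ACMxy K 𝕏)
    (s s₁ s₂ : ℕ) (hs : s = 𝕏.card) (hs₁ : s₁ = (𝕏.image Prod.fst).card)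
    (hs₂ : s₂ = (𝕏.image Prod.snd).card)
    (r : ℕ) (H : Fin r → BiRing K m n) (hHhom : ∀ k, ∃ d, IsBihom K (H k) d)
    (hHgen : Ideal.span (Set.range H) = vIdealB K 𝕏) :
    ∀ i j : ℤ, ((s₁ : ℤ) - 1) * (m + 2) ≤ i → ((s₂ : ℤ) - 1) * (n + 2) ≤ j →
      HFIdealB K (vIdealB K 𝕏) (kdiffB K (vIdealB K 𝕏) H) (i, j) = s := by
  intro i j hi hj
  subst hs hs₁ hs₂
  have hs₁ : (1 : ℤ) ≤ (𝕏.image Prod.fst).card := mod_cast (hne.image _).card_pos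
  have hs₂ : (1 : ℤ) ≤ (𝕏.image Prod.snd).card := mod_cast (hne.image _).card_pos
  exact statement_7_general hgood (fun p hp => hACM.coord_zero_ne_zero hgood hp) hHgen
    (by linarith) (by linarith)
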